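/- arXiv:2602.08258 — 2 statements merged into one kernel-verified Lean document; each statement's English description precedes it below -/
import Mathlib

section
/- Let R be a one-dimensional Cohen-Macaulay local ring with maximal ideal m, I an m-primary ideal, M a nonzero finitely generated torsion-free R-module, and (x) a minimal reduction of I. Then e_R(I, M) = e_R(I, IM) = length_R(IM/xIM). -/
/-!
A minimal reduction `x` of an `m`-primary ideal `I` is regular, because some power of a regular
element of `m` lies in `(x)`; hence `x` acts injectively on every torsion-free module `N`.
For any submodule `K` of `N`, multiplication by `x` then gives an exact sequence
`0 → N/K → N/xK → N/xN → 0` (`length_quotient_span_smul`). With `K = I^n N` and `n` large,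
`xK = I^(n+1) N`, so `ℓ(N/I^(n+1)N) = ℓ(N/I^nN) + ℓ(N/xN)`: the multiplicity of `N` is
`ℓ(N/xN)` (`hsMult_eq_length`). With `N = M` and `K = IM`, comparison with
`0 → IM/xIM → M/xIM → M/IM → 0` gives `ℓ(IM/xIM) = ℓ(M/xM)`, as `ℓ(M/IM)` is finite.
-/

open IsLocalRing Filter

section Defs

variable (R : Type*) [CommRing R]

/-- The length of an `R`-module `M`: the Krull dimension of its lattice of submodules. -/
noncomputable def mlen (M : Type*) [AddCommGroup M] [Module R M] : WithBot ℕ∞ :=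
  Order.krullDim (Submodule R M)

/-- The minimal number of generators of an `R`-module. -/
noncomputable def mu (M : Type*) [AddCommGroup M] [Module R M] : ℕ :=
  sInf {n | ∃ s : Finset M, s.card = n ∧ Submodule.span R (s : Set M) = ⊤}

/-- The Hilbert–Samuel multiplicity `e_R(I, M)` of a finitely generated module over a
one-dimensional local ring with respect to an `m`-primary ideal `I`: the eventual value of
`ℓ(M/I^{n+1}M) - ℓ(M/I^n M)`. -/
noncomputable def hsMult (I : Ideal R) (M : Type*) [AddCommGroup M] [Module R M] : ℕ∞ := by
  classical
  exact if h : ∃ e : ℕ∞, ∀ᶠ n in atTop,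
      mlen R (M ⧸ (I ^ (n + 1) • (⊤ : Submodule R M))) =
        mlen R (M ⧸ (I ^ n • (⊤ : Submodule R M))) + (e : WithBot ℕ∞)
    then h.choose else 0

/-- The length of the subquotient `P/Q` for submodules `Q ⊆ P` of `M`. -/
noncomputable def qlen {M : Type*} [AddCommGroup M] [Module R M]
    (P Q : Submodule R M) : WithBot ℕ∞ :=
  mlen R (↥P ⧸ Q.comap P.subtype)

/-- `(x)` is a minimal reduction of `I` (one-dimensional situation): a principal subideal with
`I^{n+1} = x I^n` for all large `n`. -/
def IsMinimalReduction (I : Ideal R) (x : R) : Prop :=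
  x ∈ I ∧ ∃ N : ℕ, ∀ n ≥ N, I ^ (n + 1) = Ideal.span {x} * I ^ n

/-- A module is torsion-free if non zero-divisors of `R` act injectively. -/
def TorsionFree (M : Type*) [AddCommGroup M] [Module R M] : Prop :=
  ∀ r ∈ nonZeroDivisors R, ∀ m : M, r • m = 0 → m = 0

/-- The embedding dimension of a local ring: the minimal number of generators of the
maximal ideal. -/
noncomputable def embdim (R : Type*) [CommRing R] [IsLocalRing R] : ℕ :=
  sInf {n | ∃ s : Finset R, s.card = n ∧ Ideal.span (s : Set R) = maximalIdeal R}

/-- A Noetherian local ring is regular iff its embedding dimension equals its Krull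
dimension. -/
def IsRegularLocal (R : Type*) [CommRing R] [IsLocalRing R] : Prop :=
  ((embdim R : ℕ∞) : WithBot ℕ∞) = ringKrullDim R

/-- The colon `(J :_Q K)` of two `R`-submodules of an `R`-algebra `Q`. -/
def colonQ {Q : Type*} [CommRing Q] [Algebra R Q] (J K : Submodule R Q) : Submodule R Q where
  carrier := {q | ∀ k ∈ K, q * k ∈ J}
  add_mem' := by
    intro a b ha hb k hk
    simpa [add_mul] using J.add_mem (ha k hk) (hb k hk)
  zero_mem' := by intro k hk; rw [zero_mul]; exact J.zero_mem
  smul_mem' := by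
    intro c a ha k hk
    simpa [smul_mul_assoc] using J.smul_mem c (ha k hk)

end Defs

theorem mlen_eq_length (R : Type*) [CommRing R] (M : Type*) [AddCommGroup M] [Module R M] :
    mlen R M = (Module.length R M : WithBot ℕ∞) :=
  (Module.coe_length R M).symm

/-- Additivity of length along `0 → N/K → N/xK → N/xN → 0`, where the first map is multiplication
by `x`. -/
theorem length_quotient_span_smul {R : Type*} [CommRing R] {N : Type*} [AddCommGroup N]
    [Module R N] {x : R} (hx : ∀ m : N, x • m = 0 → m = 0) (K : Submodule R N) :
    Module.length R (N ⧸ (Ideal.span {x} • K)) =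
      Module.length R (N ⧸ K) + Module.length R (N ⧸ (Ideal.span {x} • (⊤ : Submodule R N))) := by
  have hle : Ideal.span {x} • K ≤ Ideal.span {x} • (⊤ : Submodule R N) :=
    Submodule.smul_mono le_rfl le_top
  have hK : K ≤ (Ideal.span {x} • K).comap (LinearMap.lsmul R N x) := fun k hk =>
    Submodule.smul_mem_smul (Ideal.mem_span_singleton_self x) hk
  refine Module.length_eq_add_of_exact (Submodule.mapQ K _ (LinearMap.lsmul R N x) hK)
    (Submodule.factor hle) ?_ (Submodule.factor_surjective hle) ?_
  · rw [injective_iff_map_eq_zero]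
    intro a
    obtain ⟨a, rfl⟩ := Submodule.mkQ_surjective _ a
    intro h
    simp only [Submodule.mkQ_apply, Submodule.mapQ_apply, LinearMap.lsmul_apply,
      Submodule.Quotient.mk_eq_zero, Submodule.ideal_span_singleton_smul] at h ⊢
    obtain ⟨k, hk, hkx⟩ := h
    have : a - k = 0 := hx _ (by rw [smul_sub, sub_eq_zero]; exact hkx.symm)
    rwa [sub_eq_zero.mp this]
  · intro b
    have hfac (b : N) : Submodule.factor hle (Submodule.Quotient.mk b) = 0 ↔ b ∈ Ideal.span {x} • (⊤ : Submodule R N) :=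
      Submodule.Quotient.mk_eq_zero _
    obtain ⟨b, rfl⟩ := Submodule.mkQ_surjective _ b
    rw [Submodule.mkQ_apply, hfac]
    constructor
    · intro h
      rw [Submodule.ideal_span_singleton_smul] at h
      obtain ⟨a, -, rfl⟩ := h
      exact ⟨Submodule.Quotient.mk a, rfl⟩
    · rintro ⟨a, ha⟩
      obtain ⟨a, rfl⟩ := Submodule.mkQ_surjective _ a
      simp only [Submodule.mkQ_apply, Submodule.mapQ_apply, LinearMap.lsmul_apply,
        Submodule.Quotient.eq] at ha
      have h := Submodule.sub_mem _
        (Submodule.smul_mem_smul (Ideal.mem_span_singleton_self x) (Submodule.mem_top (x := a)))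
        (hle ha)
      simpa using h

/-- Additivity of length along `0 → K/L → N/L → N/K → 0`. -/
theorem length_quotient_comap_add {R : Type*} [CommRing R] {N : Type*} [AddCommGroup N]
    [Module R N] {K L : Submodule R N} (h : L ≤ K) :
    Module.length R (N ⧸ L) =
      Module.length R (K ⧸ L.comap K.subtype) + Module.length R (N ⧸ K) := by
  refine Module.length_eq_add_of_exact (Submodule.mapQ _ L K.subtype le_rfl)
    (Submodule.factor h) ?_ (Submodule.factor_surjective h) ?_
  · rw [injective_iff_map_eq_zero]
    intro a
    obtain ⟨a, rfl⟩ := Submodule.mkQ_surjective _ a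
    simp
  · intro b
    have hfac (b : N) : Submodule.factor h (Submodule.Quotient.mk b) = 0 ↔ b ∈ K :=
      Submodule.Quotient.mk_eq_zero _
    obtain ⟨b, rfl⟩ := Submodule.mkQ_surjective _ b
    rw [Submodule.mkQ_apply, hfac]
    constructor
    · intro hb
      exact ⟨Submodule.Quotient.mk ⟨b, hb⟩, rfl⟩
    · rintro ⟨a, ha⟩
      obtain ⟨a, rfl⟩ := Submodule.mkQ_surjective _ a
      simp only [Submodule.mkQ_apply, Submodule.mapQ_apply, Submodule.subtype_apply,
        Submodule.Quotient.eq] at ha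
      simpa using K.sub_mem a.2 (h ha)

theorem length_quotient_smul_top_ne_top {R : Type*} [CommRing R] [IsLocalRing R]
    [IsNoetherianRing R] {J : Ideal R} (hJ : J.radical = maximalIdeal R)
    (N : Type*) [AddCommGroup N] [Module R N] [Module.Finite R N] :
    Module.length R (N ⧸ (J • (⊤ : Submodule R N))) ≠ ⊤ := by
  have : IsArtinianRing (R ⧸ J) := by
    apply IsLocalRing.quotient_artinian_of_mem_minimalPrimes_of_isLocalRing
    rw [← Ideal.radical_minimalPrimes, hJ, Ideal.minimalPrimes_eq_subsingleton_self]
    rfl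
  have : Module.Finite (R ⧸ J) (N ⧸ (J • (⊤ : Submodule R N))) :=
    Module.Finite.of_restrictScalars_finite R _ _
  have : IsArtinian R (N ⧸ (J • (⊤ : Submodule R N))) :=
    isArtinian_of_surjective_algebraMap (S := R) (R := R ⧸ J) Ideal.Quotient.mk_surjective
  exact Module.length_ne_top

theorem IsMinimalReduction.mem_nonZeroDivisors {R : Type*} [CommRing R] [IsLocalRing R]
    (hCM : ∃ r ∈ maximalIdeal R, r ∈ nonZeroDivisors R)
    {I : Ideal R} (hI : I.radical = maximalIdeal R) {x : R} (hx : IsMinimalReduction R I x) :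
    x ∈ nonZeroDivisors R := by
  obtain ⟨r, hr, hr0⟩ := hCM
  obtain ⟨k, hk⟩ := Ideal.mem_radical_iff.mp (hI.symm.le hr)
  obtain ⟨-, N, hN⟩ := hx
  have h : (r ^ k) ^ (N + 1) ∈ Ideal.span {x} * I ^ N := by
    rw [← hN N le_rfl]
    exact Ideal.pow_mem_pow hk _
  obtain ⟨c, -, hc⟩ := Ideal.mem_span_singleton_mul.mp h
  have hreg : x * c ∈ nonZeroDivisors R := by
    rw [hc]
    exact pow_mem (pow_mem hr0 k) _
  exact (mul_mem_nonZeroDivisors.mp hreg).1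

/-- The multiplicity along `I` of a torsion-free module `N` is the length of `N/xN`, for any
minimal reduction `x` of `I`. -/
theorem hsMult_eq_length {R : Type*} [CommRing R] [IsLocalRing R] [IsNoetherianRing R]
    (hCM : ∃ r ∈ maximalIdeal R, r ∈ nonZeroDivisors R)
    {I : Ideal R} (hI : I.radical = maximalIdeal R)
    {x : R} (hx : IsMinimalReduction R I x)
    (N : Type*) [AddCommGroup N] [Module R N] [Module.Finite R N] (hTF : TorsionFree R N) :
    hsMult R I N = Module.length R (N ⧸ (Ideal.span {x} • (⊤ : Submodule R N))) := by
  have hinj := hTF x (hx.mem_nonZeroDivisors hCM hI)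
  have hfin : ∀ n ≠ 0, Module.length R (N ⧸ (I ^ n • (⊤ : Submodule R N))) ≠ ⊤ := fun n hn =>
    length_quotient_smul_top_ne_top (by rw [Ideal.radical_pow I hn, hI]) N
  obtain ⟨n₀, hn₀⟩ := hx.2
  have hstep : ∀ n ≥ n₀, Module.length R (N ⧸ (I ^ (n + 1) • (⊤ : Submodule R N))) =
      Module.length R (N ⧸ (I ^ n • (⊤ : Submodule R N))) +
        Module.length R (N ⧸ (Ideal.span {x} • (⊤ : Submodule R N))) := fun n hn => by
    rw [hn₀ n hn, Submodule.mul_smul, length_quotient_span_smul hinj]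
  have hex : ∃ e : ℕ∞, ∀ᶠ n in atTop,
      mlen R (N ⧸ (I ^ (n + 1) • (⊤ : Submodule R N))) =
        mlen R (N ⧸ (I ^ n • (⊤ : Submodule R N))) + (e : WithBot ℕ∞) := by
    refine ⟨Module.length R (N ⧸ (Ideal.span {x} • (⊤ : Submodule R N))),
      eventually_atTop.mpr ⟨n₀, fun n hn => ?_⟩⟩
    rw [mlen_eq_length, mlen_eq_length, hstep n hn, WithBot.coe_add]
  rw [hsMult, dif_pos hex]
  -- For `n ≥ 1` the finite `ℓ(N/I^nN)` cancels, so the chosen value can only be `ℓ(N/xN)`.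
  obtain ⟨n, hchoose, hn, hn1⟩ :=
    (hex.choose_spec.and ((eventually_ge_atTop n₀).and (eventually_ge_atTop 1))).exists
  rw [mlen_eq_length, mlen_eq_length, hstep n hn, ← WithBot.coe_add, WithBot.coe_inj] at hchoose
  exact (ENat.add_right_injective_of_ne_top (hfin n (by omega)) hchoose).symm


/-- over a one-dimensional CM local ring, for an `m`-primary ideal `I`, a nonzero
finitely generated torsion-free module `M`, and a minimal reduction `(x)` of `I`, one has
`e_R(I, M) = e_R(I, IM) = ℓ_R(IM/xIM)`. -/
theorem stmt0 (R : Type*) [CommRing R] [IsLocalRing R] [IsNoetherianRing R]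
    (hdim : ringKrullDim R = 1)
    (hCM : ∃ r ∈ maximalIdeal R, r ∈ nonZeroDivisors R)
    (I : Ideal R) (hI : I.radical = maximalIdeal R)
    (M : Type*) [AddCommGroup M] [Module R M] [Module.Finite R M] [Nontrivial M]
    (hTF : TorsionFree R M)
    (x : R) (hx : IsMinimalReduction R I x) :
    hsMult R I M = hsMult R I ↥(I • (⊤ : Submodule R M)) ∧
    ((hsMult R I ↥(I • (⊤ : Submodule R M)) : ℕ∞) : WithBot ℕ∞) =
      qlen R (I • (⊤ : Submodule R M)) (Ideal.span {x} • (I • (⊤ : Submodule R M))) := by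
  have hTF' : TorsionFree R ↥(I • (⊤ : Submodule R M)) := fun r hr m hm =>
    Subtype.ext (hTF r hr m (congrArg Subtype.val hm))
  have hinj := hTF x (hx.mem_nonZeroDivisors hCM hI)
  set K : Submodule R M := I • ⊤ with hK
  have hxK : Ideal.span {x} • K ≤ K := Submodule.smul_le_right
  have hcomap : (Ideal.span {x} • K).comap K.subtype = Ideal.span {x} • (⊤ : Submodule R K) := by
    apply Submodule.map_injective_of_injective K.subtype_injective
    rw [Submodule.map_smul'', Submodule.map_subtype_top, Submodule.map_comap_subtype,
      inf_eq_right.mpr hxK]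
  -- `ℓ(M/xK)` computed along `xM` and along `K`, where `K = IM`; the finite `ℓ(M/K)` cancels.
  have hlen : Module.length R (M ⧸ (Ideal.span {x} • (⊤ : Submodule R M))) =
      Module.length R (K ⧸ (Ideal.span {x} • (⊤ : Submodule R K))) := by
    have h1 := length_quotient_span_smul hinj K
    have h2 := length_quotient_comap_add hxK
    rw [h1, hcomap, add_comm _ (Module.length R (M ⧸ K))] at h2
    exact ENat.add_right_injective_of_ne_top (length_quotient_smul_top_ne_top hI M) h2
  rw [hsMult_eq_length hCM hI hx M hTF, hsMult_eq_length hCM hI hx K hTF', qlen, hcomap,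
    mlen_eq_length]
  exact ⟨hlen, rfl⟩
end

section
/- Let R be a one-dimensional Cohen-Macaulay local ring with maximal ideal m, M a finitely generated torsion-free R-module, and A = R ⋉ M the idealization (Nagata trivial extension). Then embdim(A) = embdim(R) + μ_R(M) and e(A) = e(R) + e_R(M). -/
/-!
Write `A = R ⋉ M`, with maximal ideal `𝔫 = 𝔪 ⊕ M`. Its powers are `𝔫ᵏ⁺¹ = 𝔪ᵏ⁺¹ ⊕ 𝔪ᵏM`
(`mem_maximalIdeal_pow_trivSqZeroExt`), so that
`ℓ(A/𝔫ᵏ⁺¹) = ℓ(R/𝔪ᵏ⁺¹) + ℓ(M/𝔪ᵏM)` (`length_trivSqZeroExt_quotient`).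

*Embedding dimension.* By Nakayama, the minimal number of generators of `N` is the length of
`N/𝔪N` (`length_quotient_smul`); comparing the formula for `k = 1` and `k = 0` gives the claim.

*Multiplicity.* Taking differences of consecutive values of `k` gives additivity as soon as the
increments of `ℓ(R/𝔪ⁿ)` and of `ℓ(M/𝔪ⁿM)` are known to be eventually constant. This is
`exists_hilbert_const`. The Hilbert function `ℓ(𝔪ⁿM/𝔪ⁿ⁺¹M)` is eventually polynomial, by the
Hilbert–Serre theorem (`hilbertSerre`). It is also bounded: for a regular element `r ∈ 𝔪`,
multiplication by `r` is injective on `M`, and `r𝔪ⁿM ⊆ 𝔪ⁿ⁺¹M`, whence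
`ℓ(𝔪ⁿM/𝔪ⁿ⁺¹M) ≤ ℓ(𝔪ⁿM/r𝔪ⁿM) = ℓ(M/rM) < ∞`, the last length being finite because `R/(r)` is
Artinian. A bounded function that is eventually polynomial is eventually constant
(`EvPoly.eventually_const`).

The Hilbert–Serre theorem is proved for subquotients `⨁ Pₙ/Qₙ` of the Rees module `⨁ 𝔪ⁿM`, given
by two families of submodules of `M`. This class is closed under kernel and cokernel of
multiplication by a degree-one element, and no graded modules beyond such families are needed.
-/

open IsLocalRing Filter

/-! ### Finite differences -/

/-- Vanishing of the `d`-th finite difference for large arguments: `f` agrees with a polynomial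
of degree less than `d` from some point on. -/
def EvPoly : ℕ → (ℕ → ℤ) → Prop
  | 0, f => ∀ᶠ n in atTop, f n = 0
  | d + 1, f => EvPoly d (fun n => f (n + 1) - f n)

theorem EvPoly.succ {d : ℕ} : ∀ {f : ℕ → ℤ}, EvPoly d f → EvPoly (d + 1) f := by
  induction d with
  | zero =>
    intro f hf
    have h1 : ∀ᶠ n in atTop, f (n + 1) = 0 := (tendsto_add_atTop_nat 1).eventually hf
    change ∀ᶠ n in atTop, f (n + 1) - f n = 0
    filter_upwards [h1, hf] with n h1 h2
    rw [h1, h2, sub_zero]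
  | succ d ih =>
    intro f hf
    exact ih hf

theorem EvPoly.mono {d e : ℕ} (h : d ≤ e) {f : ℕ → ℤ} (hf : EvPoly d f) : EvPoly e f := by
  induction h with
  | refl => exact hf
  | step _ ih => exact ih.succ

theorem EvPoly.sub {d : ℕ} :
    ∀ {f g : ℕ → ℤ}, EvPoly d f → EvPoly d g → EvPoly d (fun n => f n - g n) := by
  induction d with
  | zero =>
    intro f g hf hg
    change ∀ᶠ n in atTop, f n - g n = 0
    filter_upwards [hf, hg] with n h1 h2
    rw [h1, h2, sub_zero]
  | succ d ih =>
    intro f g hf hg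
    change EvPoly d _
    have := ih hf hg
    convert this using 2
    ring

theorem EvPoly.shift {d : ℕ} : ∀ {f : ℕ → ℤ}, EvPoly d f → EvPoly d (fun n => f (n + 1)) := by
  induction d with
  | zero => exact fun hf => (tendsto_add_atTop_nat 1).eventually hf
  | succ d ih => exact fun hf => ih hf

/-- A bounded function that is eventually polynomial is eventually constant. -/
theorem EvPoly.eventually_const {d : ℕ} : ∀ {f : ℕ → ℤ} {B : ℤ}, EvPoly d f →
    (∀ n, |f n| ≤ B) → ∃ c, ∀ᶠ n in atTop, f n = c := by
  induction d with
  | zero => exact fun hf _ => ⟨0, hf⟩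
  | succ d ih =>
    intro f B hf hB
    obtain ⟨c, hc⟩ := ih (B := B + B) hf fun n =>
      (abs_sub _ _).trans (add_le_add (hB _) (hB _))
    obtain ⟨N, hN⟩ := eventually_atTop.1 hc
    have hlin : ∀ k : ℕ, f (N + k) = f N + k * c := by
      intro k
      induction k with
      | zero => simp
      | succ k ihk =>
        have := hN (N + k) (by omega)
        rw [← add_assoc]
        push_cast
        linarith
    -- A nonzero slope `c` would make `f` exceed the bound at the `(2B + 1)`-st step.
    have hc0 : c = 0 := by
      by_contra hne
      have hB0 : 0 ≤ B := (abs_nonneg _).trans (hB 0)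
      have h1 := hlin (2 * B + 1).toNat
      have hk : ((2 * B + 1).toNat : ℤ) = 2 * B + 1 := Int.toNat_of_nonneg (by omega)
      rw [hk] at h1
      have h2 := abs_le.1 (hB (N + (2 * B + 1).toNat))
      have h3 := abs_le.1 (hB N)
      rw [h1] at h2
      rcases lt_or_gt_of_ne hne with h | h
      · nlinarith
      · nlinarith
    refine ⟨f N, eventually_atTop.2 ⟨N, fun n hn => ?_⟩⟩
    obtain ⟨k, rfl⟩ := Nat.exists_eq_add_of_le hn
    rw [hlin, hc0, mul_zero, add_zero]

/-! ### Colengths of submodules -/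

section Colength

variable {R : Type*} [CommRing R] {M : Type*} [AddCommGroup M] [Module R M]

theorem length_quotient_anti {P Q : Submodule R M} (h : Q ≤ P) :
    Module.length R (M ⧸ P) ≤ Module.length R (M ⧸ Q) :=
  Module.length_le_of_surjective (Submodule.factor h) (Submodule.factor_surjective h)

theorem length_quotient_eq_add {P Q : Submodule R M} (h : Q ≤ P) :
    Module.length R (M ⧸ Q) =
      Module.length R (LinearMap.range (Q.mkQ ∘ₗ P.subtype)) + Module.length R (M ⧸ P) := by
  refine Module.length_eq_add_of_exact (LinearMap.range (Q.mkQ ∘ₗ P.subtype)).subtype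
    (Submodule.factor h) (Submodule.injective_subtype _) (Submodule.factor_surjective h) ?_
  rw [LinearMap.exact_iff, Submodule.range_subtype, LinearMap.range_comp, Submodule.range_subtype]
  exact Submodule.ker_mapQ _ _ _ _

/-- Multiplication by `x` identifies `P / (P ∩ x⁻¹ Q)` with `(xP + Q) / Q`. -/
theorem length_colon (x : M →ₗ[R] M) (P Q : Submodule R M) :
    Module.length R (M ⧸ (P ⊓ Q.comap x)) + Module.length R (M ⧸ (P.map x ⊔ Q)) =
      Module.length R (M ⧸ Q) + Module.length R (M ⧸ P) := by
  have h1 := length_quotient_eq_add (P := P) (Q := P ⊓ Q.comap x) inf_le_left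
  have h2 := length_quotient_eq_add (P := P.map x ⊔ Q) (Q := Q) le_sup_right
  have h3 : Module.length R (LinearMap.range ((P ⊓ Q.comap x).mkQ ∘ₗ P.subtype)) =
      Module.length R (LinearMap.range (Q.mkQ ∘ₗ (P.map x ⊔ Q).subtype)) := by
    have e1 : LinearMap.range (Q.mkQ ∘ₗ (P.map x ⊔ Q).subtype) =
        LinearMap.range (Q.mkQ ∘ₗ x ∘ₗ P.subtype) := by
      rw [LinearMap.range_comp, LinearMap.range_comp, LinearMap.range_comp,
        Submodule.range_subtype, Submodule.range_subtype, Submodule.map_sup,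
        Submodule.mkQ_map_self, sup_bot_eq]
    have e2 : LinearMap.ker ((P ⊓ Q.comap x).mkQ ∘ₗ P.subtype) =
        LinearMap.ker (Q.mkQ ∘ₗ x ∘ₗ P.subtype) := by
      ext p
      simp
    rw [e1, ← (LinearMap.quotKerEquivRange _).length_eq, e2,
      (LinearMap.quotKerEquivRange _).length_eq]
  rw [h1, h2, h3]
  ring

/-- The length of `M / N` as an integer; it is junk when that length is infinite. -/
noncomputable def colen (N : Submodule R M) : ℤ := ((Module.length R (M ⧸ N)).toNat : ℤ)

theorem length_ne_top_mono {P Q : Submodule R M} (h : Q ≤ P)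
    (hQ : Module.length R (M ⧸ Q) ≠ ⊤) : Module.length R (M ⧸ P) ≠ ⊤ :=
  ne_top_of_le_ne_top hQ (length_quotient_anti h)

theorem colen_anti {P Q : Submodule R M} (h : Q ≤ P)
    (hQ : Module.length R (M ⧸ Q) ≠ ⊤) : colen P ≤ colen Q := by
  unfold colen
  exact_mod_cast ENat.toNat_le_toNat (length_quotient_anti h) hQ

theorem colen_colon (x : M →ₗ[R] M) (P Q : Submodule R M)
    (hK : Module.length R (M ⧸ (P ⊓ Q.comap x)) ≠ ⊤) (hQ : Module.length R (M ⧸ Q) ≠ ⊤) :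
    colen (P ⊓ Q.comap x) + colen (P.map x ⊔ Q) = colen Q + colen P := by
  have h := congrArg ENat.toNat (length_colon x P Q)
  rw [ENat.toNat_add hK (length_ne_top_mono le_sup_right hQ),
    ENat.toNat_add hQ (length_ne_top_mono inf_le_left hK)] at h
  unfold colen
  exact_mod_cast h

end Colength

/-! ### The Hilbert–Serre theorem for subquotients of the Rees module -/

section HilbertSerre

variable {R : Type*} [CommRing R] {M : Type*} [AddCommGroup M] [Module R M] {I : Ideal R}

/-- The submodule `⨁ Nₙ tⁿ` of `M[t]` over the Rees algebra of `I`, for a family `N` with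
`I Nₙ ⊆ Nₙ₊₁`. Unlike in `Ideal.Filtration`, the family need not be decreasing. -/
noncomputable def gradedSubmodule (N : ℕ → Submodule R M) (hN : ∀ n, I • N n ≤ N (n + 1)) :
    Submodule (reesAlgebra I) (PolynomialModule R M) where
  carrier := { f | ∀ i, f.coeff i ∈ N i }
  add_mem' hf hg i := Submodule.add_mem _ (hf i) (hg i)
  zero_mem' _ := Submodule.zero_mem _
  smul_mem' r f hf i := by
    have hpow : ∀ i j, I ^ i • N j ≤ N (i + j) := by
      intro i j
      induction i with
      | zero => simp
      | succ i ih =>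
        rw [pow_succ', mul_smul, add_assoc, add_comm 1, ← add_assoc]
        exact (smul_mono_right _ ih).trans (hN _)
    rw [Subalgebra.smul_def, PolynomialModule.smul_apply]
    apply Submodule.sum_mem
    rintro ⟨j, k⟩ e
    obtain rfl := Finset.HasAntidiagonal.mem_antidiagonal.1 e
    exact hpow j k (Submodule.smul_mem_smul (r.2 j) (hf k))

/-- If `I` annihilates the graded subquotient `⨁ Pₙ / Qₙ` of the Rees module of `M`, then this
subquotient is concentrated in finitely many degrees. -/
theorem eventually_eq_of_smul_le [IsNoetherianRing R] [Module.Finite R M]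
    (P Q : ℕ → Submodule R M) (hP : ∀ n, I • P n ≤ P (n + 1)) (hQ : ∀ n, I • Q n ≤ Q (n + 1))
    (hQP : ∀ n, Q n ≤ P n) (hPI : ∀ n, P n ≤ I ^ n • ⊤) (h : ∀ n, I • P n ≤ Q (n + 1)) :
    ∀ᶠ n in atTop, P n = Q n := by
  classical
  let F := I.stableFiltration (⊤ : Submodule R M)
  have hF : F.submodule.FG :=
    (F.submodule_fg_iff_stable fun i => IsNoetherian.noetherian _).2
      (I.stableFiltration_stable ⊤)
  have hnoeth : IsNoetherian (reesAlgebra I) F.submodule := isNoetherian_of_fg_of_noetherian _ hF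
  -- The chain of graded submodules that agree with `P` in degrees below `k`, with `Q` above.
  let N : ℕ → ℕ → Submodule R M := fun k n => if n < k then P n else Q n
  have hN : ∀ k n, I • N k n ≤ N k (n + 1) := by
    intro k n
    simp only [N]
    split_ifs with h1 h2
    · exact hP n
    · exact h n
    · omega
    · exact hQ n
  have hNF : ∀ k, gradedSubmodule (N k) (hN k) ≤ F.submodule := by
    intro k f hf i
    refine hPI i ?_
    have := hf i
    simp only [N] at this
    split_ifs at this
    · exact this
    · exact hQP i this
  have hmono : Monotone fun k => gradedSubmodule (N k) (hN k) := by
    intro k l hkl f hf i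
    have := hf i
    change f.coeff i ∈ N l i
    simp only [N] at this ⊢
    by_cases h1 : i < k
    · rwa [if_pos (h1.trans_le hkl), ← if_pos (c := i < k) (t := P i) (e := Q i) h1]
    · rw [if_neg h1] at this
      split_ifs
      · exact hQP i this
      · exact this
  obtain ⟨k, hk⟩ := monotone_stabilizes_iff_noetherian.2 hnoeth
    ⟨fun k => (gradedSubmodule (N k) (hN k)).comap F.submodule.subtype,
      fun a b hab => Submodule.comap_mono (hmono hab)⟩
  refine eventually_atTop.2 ⟨k, fun n hn => le_antisymm (fun p hp => ?_) (hQP n)⟩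
  have hp' : PolynomialModule.single R n p ∈ gradedSubmodule (N (n + 1)) (hN (n + 1)) := by
    intro i
    rw [PolynomialModule.coeff_single, Finsupp.single_apply]
    split_ifs with hi
    · subst hi
      simpa [N] using hp
    · exact zero_mem _
  have heq := hk (n + 1) (by omega)
  have hmem : (⟨_, hNF _ hp'⟩ : F.submodule) ∈
      (gradedSubmodule (N (n + 1)) (hN (n + 1))).comap F.submodule.subtype := hp'
  have hmem' : (⟨_, hNF _ hp'⟩ : F.submodule) ∈
      (gradedSubmodule (N k) (hN k)).comap F.submodule.subtype := by
    have heq' : (gradedSubmodule (N k) (hN k)).comap F.submodule.subtype =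
      (gradedSubmodule (N (n + 1)) (hN (n + 1))).comap F.submodule.subtype := heq
    rw [heq']
    exact hmem
  have := hmem' n
  simpa [N, not_lt.2 hn, PolynomialModule.coeff_single] using this

/-- The Hilbert–Serre theorem for graded subquotients `⨁ Pₙ / Qₙ` of the Rees module of `M`,
by induction on the number of generators of `I` that act nontrivially. -/
theorem hilbertSerre [IsNoetherianRing R] [Module.Finite R M] (T : Finset R) :
    ∀ (_ : ∀ x ∈ T, x ∈ I) (I₀ : Ideal R) (_ : I ≤ I₀ ⊔ Ideal.span (T : Set R))
      (P Q : ℕ → Submodule R M) (_ : ∀ n, I • P n ≤ P (n + 1)) (_ : ∀ n, I • Q n ≤ Q (n + 1))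
      (_ : ∀ n, Q n ≤ P n) (_ : ∀ n, P n ≤ I ^ n • ⊤) (_ : ∀ n, I₀ • P n ≤ Q (n + 1))
      (_ : ∀ n, Module.length R (M ⧸ Q n) ≠ ⊤),
      ∃ d, EvPoly d (fun n => colen (Q n) - colen (P n)) := by
  classical
  induction T using Finset.induction_on with
  | empty =>
    intro _ I₀ hI P Q hP hQ hQP hPI h _
    have hI' : I ≤ I₀ := by simpa using hI
    refine ⟨0, ?_⟩
    change ∀ᶠ n in atTop, _
    filter_upwards [eventually_eq_of_smul_le P Q hP hQ hQP hPI
      fun n => (Submodule.smul_mono_left hI').trans (h n)] with n hn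
    rw [hn, sub_self]
  | insert x T _ ih =>
    intro hT I₀ hI P Q hP hQ hQP hPI h hfin
    have hx : x ∈ I := hT x (Finset.mem_insert_self _ _)
    have hT' : ∀ y ∈ T, y ∈ I := fun y hy => hT y (Finset.mem_insert_of_mem hy)
    have hI' : I ≤ (I₀ ⊔ Ideal.span {x}) ⊔ Ideal.span (T : Set R) := by
      rw [Finset.coe_insert, Set.insert_eq, Ideal.span_union, ← sup_assoc] at hI
      exact hI
    let φ : M →ₗ[R] M := LinearMap.lsmul R M x
    -- `K / Q` is the kernel and `P / C` the cokernel of multiplication by `x` on `P / Q`.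
    let K : ℕ → Submodule R M := fun n => P n ⊓ (Q (n + 1)).comap φ
    let C : ℕ → Submodule R M := fun n =>
      Nat.casesOn n (Q 0) (fun n => (P n).map φ ⊔ Q (n + 1))
    have hQK : ∀ n, Q n ≤ K n := fun n => le_inf (hQP n) fun q hq =>
      hQ n (Submodule.smul_mem_smul hx hq)
    have hQC : ∀ n, Q n ≤ C n := by
      intro n
      cases n with
      | zero => exact le_rfl
      | succ n => exact le_sup_right
    have hxP : ∀ n, (P n).map φ ≤ P (n + 1) := by
      rintro n _ ⟨p, hp, rfl⟩
      exact hP n (Submodule.smul_mem_smul hx hp)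
    have hCP : ∀ n, C n ≤ P n := by
      intro n
      cases n with
      | zero => exact hQP 0
      | succ n => exact sup_le (hxP n) (hQP _)
    have hKg : ∀ n, I • K n ≤ K (n + 1) := by
      intro n
      refine Submodule.smul_le.2 fun y hy k hk => ⟨hP n (Submodule.smul_mem_smul hy hk.1), ?_⟩
      change x • y • k ∈ Q (n + 1 + 1)
      rw [smul_comm]
      exact hQ (n + 1) (Submodule.smul_mem_smul hy hk.2)
    have hCg : ∀ n, I • C n ≤ C (n + 1) := by
      intro n
      cases n with
      | zero => exact (hQ 0).trans (hQC 1)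
      | succ n =>
        change I • ((P n).map φ ⊔ Q (n + 1)) ≤ (P (n + 1)).map φ ⊔ Q (n + 2)
        rw [Submodule.smul_sup, ← Submodule.map_smul'']
        exact sup_le_sup (Submodule.map_mono (hP n)) (hQ _)
    have hspan : ∀ N N' : Submodule R M, N.map φ ≤ N' → Ideal.span {x} • N ≤ N' := by
      intro N N' h
      rw [Submodule.ideal_span_singleton_smul]
      rintro _ ⟨p, hp, rfl⟩
      exact h (Submodule.mem_map_of_mem (f := φ) hp)
    obtain ⟨d₁, h₁⟩ := ih hT' (I₀ ⊔ Ideal.span {x}) hI' K Q hKg hQ hQK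
      (fun n => inf_le_left.trans (hPI n)) (fun n => by
        rw [Submodule.sup_smul]
        refine sup_le ((smul_mono_right _ inf_le_left).trans (h n)) (hspan _ _ ?_)
        rintro _ ⟨p, hp, rfl⟩
        exact hp.2) hfin
    obtain ⟨d₂, h₂⟩ := ih hT' (I₀ ⊔ Ideal.span {x}) hI' P C hP hCg hCP hPI (fun n => by
        rw [Submodule.sup_smul]
        exact sup_le ((h n).trans (hQC _)) (hspan _ _ le_sup_left))
      (fun n => length_ne_top_mono (hQC n) (hfin n))
    refine ⟨max d₂ d₁ + 1, ?_⟩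
    change EvPoly (max d₂ d₁) _
    have := (h₂.shift.mono (le_max_left d₂ d₁)).sub (h₁.mono (le_max_right d₂ d₁))
    convert this using 1
    ext n
    have := colen_colon φ (P n) (Q (n + 1)) (length_ne_top_mono (hQK n) (hfin n)) (hfin _)
    change colen (K n) + colen (C (n + 1)) = _ at this
    linarith

end HilbertSerre

/-! ### Hilbert functions over a local ring -/

section Local

variable {R : Type*} [CommRing R] [IsLocalRing R] {M : Type*} [AddCommGroup M] [Module R M]

/-- Nakayama: the minimal number of generators of `N` is the length of `N / 𝔪N`. -/
theorem length_quotient_smul (N : Submodule R M) (hN : N.FG) :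
    Module.length R (M ⧸ (maximalIdeal R • N)) =
      (N.spanFinrank : ℕ∞) + Module.length R (M ⧸ N) := by
  rw [length_quotient_eq_add (P := N) (Q := maximalIdeal R • N) Submodule.smul_le_right]
  congr 1
  have hfin : Module.Finite R N := Module.Finite.iff_fg.2 hN
  let _ : Field (R ⧸ maximalIdeal R) := Ideal.Quotient.field _
  rw [IsLocalRing.spanFinrank_eq_finrank_quotient N hN, ← Module.length_eq_finrank,
    ← Module.length_eq_of_surjective (S := R) (R := R ⧸ maximalIdeal R)
      Ideal.Quotient.mk_surjective,
    ← (LinearMap.quotKerEquivRange _).length_eq]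
  refine (Submodule.quotEquivOfEq _ _ ?_).length_eq
  rw [LinearMap.ker_comp, Submodule.ker_mkQ]
  apply Submodule.map_injective_of_injective N.injective_subtype
  rw [Submodule.map_smul'', Submodule.map_top, Submodule.range_subtype, Submodule.map_comap_subtype,
    inf_eq_right]
  exact Submodule.smul_le_right

theorem length_quotient_pow_succ [IsNoetherianRing R] [Module.Finite R M] (n : ℕ) :
    Module.length R (M ⧸ (maximalIdeal R ^ (n + 1) • (⊤ : Submodule R M))) =
      ((maximalIdeal R ^ n • (⊤ : Submodule R M)).spanFinrank : ℕ∞) +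
        Module.length R (M ⧸ (maximalIdeal R ^ n • (⊤ : Submodule R M))) := by
  rw [← length_quotient_smul _ (IsNoetherian.noetherian _), ← mul_smul, ← pow_succ']

theorem length_quotient_pow_ne_top [IsNoetherianRing R] [Module.Finite R M] (n : ℕ) :
    Module.length R (M ⧸ (maximalIdeal R ^ n • (⊤ : Submodule R M))) ≠ ⊤ := by
  induction n with
  | zero =>
    have : Subsingleton (M ⧸ (maximalIdeal R ^ 0 • (⊤ : Submodule R M))) := by
      rw [Submodule.Quotient.subsingleton_iff]
      simp
    rw [Module.length_eq_zero]
    exact ENat.zero_ne_top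
  | succ n ih =>
    rw [length_quotient_pow_succ]
    simpa using ih

/-- In the presence of a regular element `r` with `M / rM` of finite length, the Hilbert function
is bounded by `ℓ(M / rM) = ℓ(N / rN)`, where `N = 𝔪ⁿM`; being eventually polynomial, it is
eventually constant. -/
theorem exists_hilbert_const [IsNoetherianRing R] (hdim : ringKrullDim R = 1)
    (hCM : ∃ r ∈ maximalIdeal R, r ∈ nonZeroDivisors R) [Module.Finite R M]
    (hTF : ∀ r ∈ nonZeroDivisors R, ∀ m : M, r • m = 0 → m = 0) :
    ∃ c : ℕ, ∀ᶠ n in atTop,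
      Module.length R (M ⧸ (maximalIdeal R ^ (n + 1) • (⊤ : Submodule R M))) =
        Module.length R (M ⧸ (maximalIdeal R ^ n • (⊤ : Submodule R M))) + c := by
  obtain ⟨r, hrm, hr⟩ := hCM
  let P : ℕ → Submodule R M := fun n => maximalIdeal R ^ n • ⊤
  have hP : ∀ n, maximalIdeal R • P n = P (n + 1) := fun n => by
    simp only [P]
    rw [← mul_smul, ← pow_succ']
  have hPfin : ∀ n, Module.length R (M ⧸ P n) ≠ ⊤ := length_quotient_pow_ne_top
  have hPanti : ∀ n, P (n + 1) ≤ P n := fun n => by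
    rw [← hP]
    exact Submodule.smul_le_right
  -- The Hilbert function is eventually polynomial.
  obtain ⟨T, hT⟩ := (maximalIdeal R).fg_of_isNoetherianRing
  obtain ⟨d, hd⟩ := hilbertSerre (I := maximalIdeal R) (M := M) T
    (fun x hx => hT ▸ Ideal.subset_span hx) ⊥ (by rw [bot_sup_eq]; exact hT.ge)
    P (fun n => P (n + 1)) (fun n => (hP n).le) (fun n => (hP _).le) hPanti (fun _ => le_rfl)
    (fun n => by rw [Submodule.bot_smul]; exact bot_le) (fun n => hPfin _)
  -- Some power of the maximal ideal lies in `(r)`, as `R / (r)` is Artinian.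
  have hart : IsArtinianRing (R ⧸ Ideal.span {r}) := by
    rw [isArtinianRing_iff_krullDimLE_zero, Ring.KrullDimLE, Order.krullDimLE_iff,
      ← ENat.WithBot.add_le_add_one_right_iff, Nat.cast_zero, zero_add]
    exact (ringKrullDim_quotient_succ_le_of_nonZeroDivisor hr).trans hdim.le
  obtain ⟨t, ht⟩ := exists_maximalIdeal_pow_le_of_isArtinianRing_quotient (Ideal.span {r})
  let φ : M →ₗ[R] M := LinearMap.lsmul R M r
  have hφ : Function.Injective φ := by
    rw [injective_iff_map_eq_zero]
    exact fun m hm => hTF r hr m hm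
  have hle : ∀ N : Submodule R M, maximalIdeal R ^ t • N ≤ N.map φ := fun N => by
    refine (Submodule.smul_mono_left ht).trans ?_
    rw [Submodule.ideal_span_singleton_smul]
    rintro _ ⟨p, hp, rfl⟩
    exact Submodule.mem_map_of_mem (f := φ) hp
  have hfin : ∀ n, Module.length R (M ⧸ (P n).map φ) ≠ ⊤ := fun n => by
    refine length_ne_top_mono ?_ (hPfin (t + n))
    simp only [P]
    rw [pow_add, mul_smul]
    exact hle _
  have hbound : ∀ n, |colen (P (n + 1)) - colen (P n)| ≤ colen ((⊤ : Submodule R M).map φ) := by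
    intro n
    have h1 := colen_colon φ ⊤ ((P n).map φ)
    rw [Submodule.comap_map_eq_of_injective hφ, top_inf_eq,
      sup_eq_left.2 (Submodule.map_mono le_top)] at h1
    have h2 := h1 (hPfin n) (hfin n)
    have h3 : colen (⊤ : Submodule R M) = 0 := by
      have : Subsingleton (M ⧸ (⊤ : Submodule R M)) := by
        rw [Submodule.Quotient.subsingleton_iff]
      simp [colen, Module.length_eq_zero]
    have h4 : colen (P (n + 1)) ≤ colen ((P n).map φ) := by
      refine colen_anti ?_ (hfin n)
      rintro _ ⟨p, hp, rfl⟩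
      rw [← hP]
      exact Submodule.smul_mem_smul hrm hp
    have h5 := colen_anti (hPanti n) (hPfin _)
    rw [abs_of_nonneg (by linarith)]
    linarith
  obtain ⟨c, hc⟩ := hd.eventually_const hbound
  refine ⟨c.toNat, ?_⟩
  filter_upwards [hc] with n hn
  have h5 := colen_anti (hPanti n) (hPfin _)
  change Module.length R (M ⧸ P (n + 1)) = Module.length R (M ⧸ P n) + _
  rw [← ENat.natCast_toNat (hPfin (n + 1)), ← ENat.natCast_toNat (hPfin n)]
  unfold colen at hn h5
  norm_cast
  omega

end Local

/-! ### The idealization -/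

/-- Length is invariant under restriction of scalars along a surjective ring homomorphism. -/
theorem length_quotient_ker_semilinear {R : Type*} [CommRing R] {M : Type*}
    [AddCommGroup M] [Module R M] {A : Type*} [CommRing A] {σ : A →+* R}
    [RingHomSurjective σ] {N : Type*} [AddCommGroup N] [Module A N] (f : N →ₛₗ[σ] M)
    (hf : Function.Surjective f) :
    Module.length A (N ⧸ LinearMap.ker f) = Module.length R M := by
  let g := (LinearMap.ker f).liftQ f le_rfl
  have hg : Function.Bijective g := by
    refine ⟨?_, fun m => ?_⟩
    · rw [← LinearMap.ker_eq_bot]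
      exact Submodule.ker_liftQ_eq_bot _ _ _ le_rfl
    · obtain ⟨x, rfl⟩ := hf m
      exact ⟨Submodule.Quotient.mk x, Submodule.liftQ_apply _ _ _⟩
  apply WithBot.coe_injective
  rw [Module.coe_length, Module.coe_length,
    Order.krullDim_eq_of_orderIso (Submodule.orderIsoMapComapOfBijective g hg)]

section Idealization

variable {R : Type*} [CommRing R] {M : Type*} [AddCommGroup M] [Module R M] [Module Rᵐᵒᵖ M]
  [IsCentralScalar R M]

instance : RingHomSurjective (TrivSqZeroExt.fstHom R R M).toRingHom :=
  ⟨TrivSqZeroExt.fst_surjective⟩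

theorem isNoetherianRing_trivSqZeroExt [IsNoetherianRing R] [Module.Finite R M] :
    IsNoetherianRing (TrivSqZeroExt R M) := by
  have : IsNoetherian R (TrivSqZeroExt R M) := inferInstanceAs (IsNoetherian R (R × M))
  exact isNoetherian_of_tower R this

variable [IsLocalRing R] [IsLocalRing (TrivSqZeroExt R M)]

theorem mem_maximalIdeal_trivSqZeroExt {x : TrivSqZeroExt R M} :
    x ∈ maximalIdeal (TrivSqZeroExt R M) ↔ x.fst ∈ maximalIdeal R := by
  rw [mem_maximalIdeal, mem_maximalIdeal, mem_nonunits_iff, mem_nonunits_iff,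
    TrivSqZeroExt.isUnit_iff_isUnit_fst]

/-- The powers of the maximal ideal `𝔫 = 𝔪 ⊕ M` are `𝔫ᵏ⁺¹ = 𝔪ᵏ⁺¹ ⊕ 𝔪ᵏM`. -/
theorem mem_maximalIdeal_pow_trivSqZeroExt (k : ℕ) {x : TrivSqZeroExt R M} :
    x ∈ maximalIdeal (TrivSqZeroExt R M) ^ (k + 1) ↔
      x.fst ∈ maximalIdeal R ^ (k + 1) ∧
        x.snd ∈ maximalIdeal R ^ k • (⊤ : Submodule R M) := by
  have hinl : ∀ (j : ℕ) (a : R), a ∈ maximalIdeal R ^ j →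
      TrivSqZeroExt.inl a ∈ maximalIdeal (TrivSqZeroExt R M) ^ j := by
    intro j a ha
    have h1 : (maximalIdeal R).map (TrivSqZeroExt.inlHom R M) ≤
        maximalIdeal (TrivSqZeroExt R M) := by
      rw [Ideal.map_le_iff_le_comap]
      intro b hb
      exact mem_maximalIdeal_trivSqZeroExt.2 hb
    have h2 := Ideal.mem_map_of_mem (TrivSqZeroExt.inlHom R M) ha
    rw [Ideal.map_pow] at h2
    exact Ideal.pow_right_mono h1 j h2
  constructor
  · induction k generalizing x with
    | zero =>
      rw [zero_add, pow_one, pow_one, pow_zero, Ideal.one_eq_top, Submodule.top_smul]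
      exact fun h => ⟨mem_maximalIdeal_trivSqZeroExt.1 h, trivial⟩
    | succ k ih =>
      intro hx
      rw [pow_succ'] at hx
      refine Submodule.mul_induction_on hx (fun a ha b hb => ?_) (fun a b ha hb => ?_)
      · obtain ⟨hb1, hb2⟩ := ih hb
        rw [mem_maximalIdeal_trivSqZeroExt] at ha
        refine ⟨?_, ?_⟩
        · rw [TrivSqZeroExt.fst_mul, pow_succ']
          exact Ideal.mul_mem_mul ha hb1
        · rw [TrivSqZeroExt.snd_mul, op_smul_eq_smul]
          refine add_mem ?_ (Submodule.smul_mem_smul hb1 trivial)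
          rw [pow_succ', mul_smul]
          exact Submodule.smul_mem_smul ha hb2
      · exact ⟨add_mem ha.1 hb.1, add_mem ha.2 hb.2⟩
  · rintro ⟨h1, h2⟩
    rw [← TrivSqZeroExt.inl_fst_add_inr_snd_eq x]
    refine add_mem (hinl _ _ h1) ?_
    refine Submodule.smul_induction_on h2 (fun a ha m _ => ?_) (fun m m' hm hm' => ?_)
    · rw [← TrivSqZeroExt.inl_mul_inr, pow_succ]
      refine Ideal.mul_mem_mul (hinl _ _ ha) (mem_maximalIdeal_trivSqZeroExt.2 ?_)
      rw [TrivSqZeroExt.fst_inr]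
      exact zero_mem _
    · rw [TrivSqZeroExt.inr_add]
      exact add_mem hm hm'

/-- The exact sequence `0 → M / 𝔪ᵏM → A / 𝔫ᵏ⁺¹ → R / 𝔪ᵏ⁺¹ → 0`, numerically. -/
theorem length_trivSqZeroExt_quotient (k : ℕ) :
    Module.length (TrivSqZeroExt R M)
        (TrivSqZeroExt R M ⧸ maximalIdeal (TrivSqZeroExt R M) ^ (k + 1)) =
      Module.length R (R ⧸ maximalIdeal R ^ (k + 1)) +
        Module.length R (M ⧸ (maximalIdeal R ^ k • (⊤ : Submodule R M))) := by
  let σ : TrivSqZeroExt R M →+* R := (TrivSqZeroExt.fstHom R R M).toRingHom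
  have hσ : ∀ x, σ x = x.fst := fun _ => rfl
  have : RingHomSurjective σ := ⟨TrivSqZeroExt.fst_surjective⟩
  let I := maximalIdeal R
  let Q : Ideal (TrivSqZeroExt R M) := maximalIdeal (TrivSqZeroExt R M) ^ (k + 1)
  let f₁ : TrivSqZeroExt R M →ₛₗ[σ] (R ⧸ I ^ (k + 1)) :=
    { toFun := fun x => Ideal.Quotient.mk _ x.fst
      map_add' := fun x y => by simp
      map_smul' := fun a x => by
        rw [smul_eq_mul, TrivSqZeroExt.fst_mul, hσ]
        rfl }
  let P : Ideal (TrivSqZeroExt R M) := LinearMap.ker f₁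
  have hP : ∀ x, x ∈ P ↔ x.fst ∈ I ^ (k + 1) := fun x => by
    simp only [P, LinearMap.mem_ker]
    exact Ideal.Quotient.eq_zero_iff_mem
  -- The second projection is linear on `P = 𝔪ᵏ⁺¹ ⊕ M` modulo `𝔪ᵏM`.
  let f₂ : P →ₛₗ[σ] (M ⧸ (I ^ k • (⊤ : Submodule R M))) :=
    { toFun := fun x => Submodule.Quotient.mk x.1.snd
      map_add' := fun x y => rfl
      map_smul' := fun a x => by
        change Submodule.Quotient.mk (a * x.1).snd = a.fst • Submodule.Quotient.mk x.1.snd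
        rw [TrivSqZeroExt.snd_mul, op_smul_eq_smul, Submodule.Quotient.mk_add,
          Submodule.Quotient.mk_smul, add_eq_left, Submodule.Quotient.mk_eq_zero]
        exact Submodule.smul_mem_smul (Ideal.pow_le_pow_right k.le_succ ((hP _).1 x.2)) trivial }
  have hQP : Q ≤ P := fun x hx =>
    (hP x).2 ((mem_maximalIdeal_pow_trivSqZeroExt k).1 hx).1
  have hker : LinearMap.ker (Q.mkQ ∘ₗ P.subtype) = LinearMap.ker f₂ := by
    rw [LinearMap.ker_comp, Submodule.ker_mkQ]
    ext x
    rw [Submodule.mem_comap, LinearMap.mem_ker]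
    change x.1 ∈ Q ↔ Submodule.Quotient.mk x.1.snd = _
    rw [Submodule.Quotient.mk_eq_zero, mem_maximalIdeal_pow_trivSqZeroExt]
    exact and_iff_right ((hP _).1 x.2)
  change Module.length _ (_ ⧸ Q) = _
  rw [length_quotient_eq_add hQP, add_comm]
  congr 1
  · refine length_quotient_ker_semilinear f₁ fun y => ?_
    obtain ⟨a, rfl⟩ := Ideal.Quotient.mk_surjective y
    exact ⟨TrivSqZeroExt.inl a, rfl⟩
  · rw [← (LinearMap.quotKerEquivRange _).length_eq, hker]
    refine length_quotient_ker_semilinear f₂ fun y => ?_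
    obtain ⟨m, rfl⟩ := Submodule.Quotient.mk_surjective _ y
    exact ⟨⟨TrivSqZeroExt.inr m, (hP _).2 (by rw [TrivSqZeroExt.fst_inr]; exact zero_mem _)⟩, rfl⟩

end Idealization

/-! ### Embedding dimension and multiplicity -/

section Invariants

theorem sInf_card_eq_spanFinrank {R : Type*} [CommRing R] {M : Type*} [AddCommGroup M]
    [Module R M] (N : Submodule R M) (hN : N.FG) :
    sInf {n | ∃ s : Finset M, s.card = n ∧ Submodule.span R (s : Set M) = N} =
      N.spanFinrank := by
  apply le_antisymm
  · exact Nat.sInf_le hN.exists_span_finset_card_eq_spanFinrank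
  · obtain ⟨s, hs⟩ := hN
    refine le_csInf ⟨_, s, rfl, hs⟩ ?_
    rintro n ⟨s, rfl, rfl⟩
    rw [← Set.ncard_coe_finset]
    exact Submodule.spanFinrank_span_le_ncard_of_finite s.finite_toSet

/-- Since the lengths involved are finite, the value chosen in `hsMult` is unique. -/
theorem hsMult_eq {R : Type*} [CommRing R] (I : Ideal R) (M : Type*) [AddCommGroup M]
    [Module R M] (e : ℕ)
    (hfin : ∀ n, Module.length R (M ⧸ (I ^ n • (⊤ : Submodule R M))) ≠ ⊤)
    (he : ∀ᶠ n in atTop, Module.length R (M ⧸ (I ^ (n + 1) • (⊤ : Submodule R M))) =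
      Module.length R (M ⧸ (I ^ n • (⊤ : Submodule R M))) + e) :
    hsMult R I M = e := by
  have h : ∃ e : ℕ∞, ∀ᶠ n in atTop,
      mlen R (M ⧸ (I ^ (n + 1) • (⊤ : Submodule R M))) =
        mlen R (M ⧸ (I ^ n • (⊤ : Submodule R M))) + (e : WithBot ℕ∞) := by
    refine ⟨e, he.mono fun n hn => ?_⟩
    unfold mlen
    rw [← Module.coe_length, ← Module.coe_length, hn]
    rfl
  unfold hsMult
  rw [dif_pos h]
  obtain ⟨n, h1, h2⟩ := (h.choose_spec.and he).exists
  unfold mlen at h1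
  rw [← Module.coe_length, ← Module.coe_length, ← WithBot.coe_add, WithBot.coe_inj, h2] at h1
  exact (ENat.add_right_injective_of_ne_top (hfin n) h1).symm

end Invariants

/-- for the idealization `A = R ⋉ M` of a f.g. torsion-free module over a
one-dimensional CM local ring, `embdim A = embdim R + μ_R(M)` and `e(A) = e(R) + e_R(M)`. -/
theorem stmt7 (R : Type*) [CommRing R] [IsLocalRing R] [IsNoetherianRing R]
    (hdim : ringKrullDim R = 1)
    (hCM : ∃ r ∈ maximalIdeal R, r ∈ nonZeroDivisors R)
    (M : Type*) [AddCommGroup M] [Module R M] [Module Rᵐᵒᵖ M] [IsCentralScalar R M]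
    [Module.Finite R M] (hTF : TorsionFree R M)
    [IsLocalRing (TrivSqZeroExt R M)] :
    embdim (TrivSqZeroExt R M) = embdim R + mu R M ∧
    hsMult (TrivSqZeroExt R M) (maximalIdeal (TrivSqZeroExt R M)) (TrivSqZeroExt R M) =
      hsMult R (maximalIdeal R) R + hsMult R (maximalIdeal R) M := by
  have hA : IsNoetherianRing (TrivSqZeroExt R M) := isNoetherianRing_trivSqZeroExt
  have hlen : ∀ k, Module.length (TrivSqZeroExt R M) (TrivSqZeroExt R M ⧸
        (maximalIdeal (TrivSqZeroExt R M) ^ (k + 1) • (⊤ : Ideal (TrivSqZeroExt R M)))) =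
      Module.length R (R ⧸ (maximalIdeal R ^ (k + 1) • (⊤ : Ideal R))) +
        Module.length R (M ⧸ (maximalIdeal R ^ k • (⊤ : Submodule R M))) := by
    intro k
    rw [smul_eq_mul, smul_eq_mul, Ideal.mul_top, Ideal.mul_top]
    exact length_trivSqZeroExt_quotient k
  constructor
  · have h1 : embdim (TrivSqZeroExt R M) = (maximalIdeal (TrivSqZeroExt R M)).spanFinrank :=
      sInf_card_eq_spanFinrank _ (IsNoetherian.noetherian _)
    have h2 : embdim R = (maximalIdeal R).spanFinrank :=
      sInf_card_eq_spanFinrank _ (IsNoetherian.noetherian _)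
    have h3 : mu R M = (⊤ : Submodule R M).spanFinrank :=
      sInf_card_eq_spanFinrank _ (IsNoetherian.noetherian _)
    rw [h1, h2, h3]
    -- Compare `ℓ(A/𝔫²) - ℓ(A/𝔫)` with `ℓ(R/𝔪²) - ℓ(R/𝔪)` and `ℓ(M/𝔪M)`.
    have a1 := length_quotient_pow_succ (R := TrivSqZeroExt R M) (M := TrivSqZeroExt R M) 1
    have a2 := length_quotient_pow_succ (R := R) (M := R) 1
    have a3 := length_quotient_pow_succ (R := R) (M := M) 0
    have f2 := length_quotient_pow_ne_top (R := R) (M := R) 1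
    have f3 := length_quotient_pow_ne_top (R := R) (M := M) 0
    rw [hlen 1, hlen 0, a2, a3] at a1
    simp only [pow_one, pow_zero, Ideal.one_eq_top, Submodule.top_smul, smul_eq_mul,
      Ideal.mul_top] at a1 f2 f3
    rw [← ENat.natCast_toNat f2, ← ENat.natCast_toNat f3] at a1
    norm_cast at a1
    omega
  · obtain ⟨c, hc⟩ := exists_hilbert_const (M := R) hdim hCM
      (fun r hr m hm => (mul_right_mem_nonZeroDivisors_eq_zero_iff hr).1 (by rwa [mul_comm]))
    obtain ⟨d, hd⟩ := exists_hilbert_const (M := M) hdim hCM hTF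
    rw [hsMult_eq _ R c length_quotient_pow_ne_top hc,
      hsMult_eq _ M d length_quotient_pow_ne_top hd, ← Nat.cast_add]
    refine hsMult_eq _ _ _ length_quotient_pow_ne_top ?_
    -- In degree `n + 1` the increment of `A` is that of `R` in degree `n + 1` plus that of `M` in
    -- degree `n`.
    obtain ⟨N, hN⟩ := eventually_atTop.1 (((tendsto_add_atTop_nat 1).eventually hc).and hd)
    refine eventually_atTop.2 ⟨N + 1, fun n hn => ?_⟩
    obtain ⟨k, rfl⟩ : ∃ k, n = k + 1 := ⟨n - 1, by omega⟩
    obtain ⟨h1, h2⟩ := hN k (by omega)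
    rw [hlen, hlen, h1, h2]
    push_cast
    ring
end
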